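/- Let f be a Rademacher random multiplicative function and let x ≥ 2. Then for every sample point, x · ∫_0^{+∞} |∑_{m ≤ z, P(m) ≤ x} f(m)|² · z^{−2} dz = (x/(2π)) · ∫_{−∞}^{+∞} |S_x(1/2+it)|² / |1/2+it|² dt, where S_x(1/2+it) := ∏_{p ≤ x, p prime} (1 + f(p)·p^{−1/2−it}). -/

import Mathlib

/-!
For `0 < σ`, the Mellin transform of the summatory function `z ↦ ∑_{m ≤ z} a m` at `-s` is
`L(a, s) / s`, so Mellin–Plancherel on the line `Re s = σ` turns `∫ |∑_{m ≤ z} a m|² z^{-2σ-1} dz`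
into the mean square of `L(a, s) / s`. When `a` is the restriction of a multiplicative function
supported on squarefree numbers to the integers all of whose prime factors are at most `x`, the
Dirichlet series `L(a, s)` is the finite Euler product `∏_{p ≤ x} (1 + a p · p^{-s})`.
-/

open MeasureTheory ProbabilityTheory

noncomputable section

/-- The largest prime factor of `n`, with `P 1 = 1` (and `P 0 = 1`). -/
def Pfac (n : ℕ) : ℕ := if n ≤ 1 then 1 else n.primeFactors.sup id

/-- A Rademacher random multiplicative function. -/
structure IsRademacherRMF {Ω : Type*} [MeasurableSpace Ω] (μ : Measure Ω)
    (f : Ω → ℕ → ℝ) : Prop where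
  meas : ∀ n : ℕ, Measurable fun ω => f ω n
  indep : iIndepFun (m := fun _ : Nat.Primes => (inferInstance : MeasurableSpace ℝ))
    (fun (p : Nat.Primes) (ω : Ω) => f ω (p : ℕ)) μ
  prob_one : ∀ p : ℕ, p.Prime → μ {ω | f ω p = 1} = 1 / 2
  prob_neg_one : ∀ p : ℕ, p.Prime → μ {ω | f ω p = -1} = 1 / 2
  eq_zero_of_not_squarefree : ∀ (ω : Ω) (n : ℕ), ¬Squarefree n → f ω n = 0
  eq_prod_of_squarefree : ∀ (ω : Ω) (n : ℕ), Squarefree n →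
    f ω n = ∏ p ∈ n.primeFactors, f ω p

/-- The truncated Euler product `S_x(1/2+it) = ∏_{p ≤ x} (1 + f(p) p^{-1/2-it})`. -/
def eulerProd {Ω : Type*} (f : Ω → ℕ → ℝ) (ω : Ω) (x : ℝ) (t : ℝ) : ℂ :=
  ∏ p ∈ (Finset.Icc 1 ⌊x⌋₊).filter Nat.Prime,
    (1 + (f ω p : ℂ) * (p : ℂ) ^ (-(1 / 2 : ℂ) - (t : ℂ) * Complex.I))

open Set Filter Asymptotics Complex FourierTransform
open scoped SchwartzMap

section Plancherel

lemma lpNorm_two_sq {α E : Type*} [MeasurableSpace α] {μ : Measure α} [NormedAddCommGroup E]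
    {f : α → E} (hf : AEStronglyMeasurable f μ) : lpNorm f 2 μ ^ 2 = ∫ x, ‖f x‖ ^ 2 ∂μ := by
  rw [lpNorm_eq_integral_norm_rpow_toReal two_ne_zero ENNReal.ofNat_ne_top hf,
    ENNReal.toReal_ofNat, ← Nat.cast_ofNat,
    Real.rpow_inv_natCast_pow (by positivity) two_ne_zero]
  simp

variable {V F : Type*} [NormedAddCommGroup V] [InnerProductSpace ℝ V] [FiniteDimensional ℝ V]
  [MeasurableSpace V] [BorelSpace V] [NormedAddCommGroup F]

lemma continuous_fourier_of_integrable [NormedSpace ℂ F] {f : V → F} (hf : Integrable f) :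
    Continuous (𝓕 f) :=
  VectorFourier.fourierIntegral_continuous Real.continuous_fourierChar continuous_inner hf

lemma integral_fourier_smul_eq_of_integrable [NormedSpace ℂ F] [CompleteSpace F] {f : V → F}
    {g : V → ℂ} (hg : Integrable g) (hf : Integrable f) :
    ∫ ξ, 𝓕 g ξ • f ξ = ∫ x, g x • 𝓕 f x := by
  simpa using! VectorFourier.integral_fourierIntegral_smul_eq_flip (L := innerₗ V)
    Real.continuous_fourierChar continuous_inner hg hf

variable [InnerProductSpace ℂ F] [CompleteSpace F] {f : V → F}

-- Both sides define the same tempered distribution.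
lemma coeFn_fourier_toLp_two_ae_eq (hf : Integrable f) (hf₂ : MemLp f 2) :
    (𝓕 (hf₂.toLp f) : Lp F 2 (volume : Measure V)) =ᵐ[volume] 𝓕 f := by
  refine ae_eq_of_integral_contDiff_smul_eq ((Lp.memLp _).locallyIntegrable one_le_two)
    (continuous_fourier_of_integrable hf).locallyIntegrable fun g hg hg_supp ↦ ?_
  set φ : 𝓢(V, ℂ) := HasCompactSupport.toSchwartzMap (f := ofRealCLM ∘ g)
    (hg_supp.comp_left rfl) (by fun_prop)
  calc ∫ ξ, g ξ • (𝓕 (hf₂.toLp f) : Lp F 2 (volume : Measure V)) ξ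
      = Lp.toTemperedDistribution (𝓕 (hf₂.toLp f)) φ := by simp [φ]
    _ = Lp.toTemperedDistribution (hf₂.toLp f) (𝓕 φ) := by
        rw [← Lp.fourier_toTemperedDistribution_eq, TemperedDistribution.fourier_apply]
    _ = ∫ ξ, 𝓕 φ ξ • f ξ := by
        rw [Lp.toTemperedDistribution_apply]
        exact integral_congr_ae (hf₂.coeFn_toLp.mono fun ξ hξ ↦ by simp only [hξ])
    _ = ∫ ξ, φ ξ • 𝓕 f ξ := by
        rw [SchwartzMap.fourier_coe, integral_fourier_smul_eq_of_integrable φ.integrable hf]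
    _ = ∫ ξ, g ξ • 𝓕 f ξ := by simp [φ]

lemma eLpNorm_two_fourier (hf : Integrable f) (hf₂ : MemLp f 2) :
    eLpNorm (𝓕 f) 2 volume = eLpNorm f 2 volume := by
  rw [← eLpNorm_congr_ae (coeFn_fourier_toLp_two_ae_eq hf hf₂), ← eLpNorm_congr_ae hf₂.coeFn_toLp,
    ← Lp.enorm_def, ← Lp.enorm_def, ← ofReal_norm, Lp.norm_fourier_eq, ofReal_norm]

theorem integral_norm_sq_fourier (hf : Integrable f) (hf₂ : MemLp f 2) :
    ∫ ξ, ‖𝓕 f ξ‖ ^ 2 = ∫ x, ‖f x‖ ^ 2 := by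
  have hmeas := (continuous_fourier_of_integrable hf).aestronglyMeasurable (μ := volume)
  rw [← lpNorm_two_sq hmeas, ← lpNorm_two_sq hf.aestronglyMeasurable, ← toReal_eLpNorm hmeas,
    ← toReal_eLpNorm hf.aestronglyMeasurable, eLpNorm_two_fourier hf hf₂]

end Plancherel

section Mellin

section ExpSubstitution

variable {F : Type*} [NormedAddCommGroup F] [NormedSpace ℝ F] (f : ℝ → F)

lemma integral_exp_smul_comp_exp : ∫ u, Real.exp u • f (Real.exp u) = ∫ t in Ioi 0, f t := by
  rw [← Real.range_exp, ← image_univ, integral_image_eq_integral_abs_deriv_smul MeasurableSet.univ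
    (fun u _ ↦ (Real.hasDerivAt_exp u).hasDerivWithinAt) Real.exp_injective.injOn]
  simp

lemma integrable_exp_smul_comp_exp_iff :
    Integrable (fun u ↦ Real.exp u • f (Real.exp u)) ↔ IntegrableOn f (Ioi 0) := by
  rw [← Real.range_exp, ← image_univ, integrableOn_image_iff_integrableOn_abs_deriv_smul
    MeasurableSet.univ (fun u _ ↦ (Real.hasDerivAt_exp u).hasDerivWithinAt)
    Real.exp_injective.injOn]
  simp

lemma exp_smul_rpow_mul_norm_sq_comp_exp (σ u : ℝ) :
    Real.exp u • (Real.exp u ^ (2 * σ - 1) * ‖f (Real.exp u)‖ ^ 2) =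
      ‖Real.exp (σ * u) • f (Real.exp u)‖ ^ 2 := by
  rw [norm_smul, mul_pow, Real.norm_of_nonneg (by positivity), ← Real.exp_nat_mul, smul_eq_mul,
    ← mul_assoc, ← Real.exp_mul, ← Real.exp_add]
  congr 2
  push_cast
  ring

end ExpSubstitution

variable {F : Type*} [NormedAddCommGroup F] {f : ℝ → F} {σ : ℝ}

lemma mellinConvergent_ofReal_iff [NormedSpace ℂ F] :
    MellinConvergent f σ ↔ Integrable fun u : ℝ ↦ Real.exp (σ * u) • f (Real.exp u) := by
  rw [MellinConvergent, ← integrable_exp_smul_comp_exp_iff]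
  refine integrable_congr (.of_forall fun u ↦ ?_)
  dsimp only
  rw [← ofReal_one, ← ofReal_sub, ← ofReal_cpow (Real.exp_pos u).le, coe_smul, smul_smul,
    ← Real.exp_mul, ← Real.exp_add]
  ring_nf

theorem integral_norm_sq_mellin [InnerProductSpace ℂ F] [CompleteSpace F]
    (hf : MellinConvergent f σ)
    (hf₂ : IntegrableOn (fun t ↦ t ^ (2 * σ - 1) * ‖f t‖ ^ 2) (Ioi 0)) :
    ∫ t : ℝ, ‖mellin f (σ + t * I)‖ ^ 2 =
      2 * Real.pi * ∫ t in Ioi 0, t ^ (2 * σ - 1) * ‖f t‖ ^ 2 := by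
  set g : ℝ → F := fun u ↦ Real.exp (σ * u) • f (Real.exp u)
  have hg : Integrable g := mellinConvergent_ofReal_iff.1 hf
  have hg₂ : MemLp g 2 := by
    rw [memLp_two_iff_integrable_sq_norm hg.aestronglyMeasurable]
    simpa only [← integrable_exp_smul_comp_exp_iff, exp_smul_rpow_mul_norm_sq_comp_exp] using hf₂
  have hmellin (t : ℝ) : mellin f (σ + t * I) = 𝓕 (fun u ↦ g (-u)) (t / (2 * Real.pi)) := by
    simp [mellin_eq_fourier, g]
  calc ∫ t : ℝ, ‖mellin f (σ + t * I)‖ ^ 2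
      = 2 * Real.pi * ∫ ξ, ‖𝓕 (fun u ↦ g (-u)) ξ‖ ^ 2 := by
        simp_rw [hmellin]
        rw [Measure.integral_comp_div (fun ξ ↦ ‖𝓕 (fun u ↦ g (-u)) ξ‖ ^ 2),
          abs_of_pos Real.two_pi_pos, smul_eq_mul]
    _ = 2 * Real.pi * ∫ u, ‖g u‖ ^ 2 := by
        rw [integral_norm_sq_fourier hg.comp_neg, integral_neg_eq_self (fun u ↦ ‖g u‖ ^ 2)]
        exact hg₂.comp_measurePreserving (Measure.measurePreserving_neg volume)
    _ = 2 * Real.pi * ∫ t in Ioi 0, t ^ (2 * σ - 1) * ‖f t‖ ^ 2 := by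
        simp_rw [← integral_exp_smul_comp_exp, exp_smul_rpow_mul_norm_sq_comp_exp, g]

end Mellin

section Summatory

/-- The summatory function `z ↦ ∑_{1 ≤ k ≤ z} f k` of an arithmetic function, extended by `0` to
`z < 1`. -/
def summatory {E : Type*} [AddCommMonoid E] (f : ℕ → E) (z : ℝ) : E :=
  ∑ k ∈ Finset.Icc 1 ⌊z⌋₊, f k

lemma summatory_of_lt_one {E : Type*} [AddCommMonoid E] (f : ℕ → E) {z : ℝ} (hz : z < 1) :
    summatory f z = 0 := by
  simp [summatory, Nat.floor_eq_zero.2 hz]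

section NormedAddCommGroup

variable {E : Type*} [NormedAddCommGroup E] {f : ℕ → E} {r : ℝ}

lemma stronglyMeasurable_summatory (f : ℕ → E) : StronglyMeasurable (summatory f) :=
  (StronglyMeasurable.of_discrete (f := fun n ↦ ∑ k ∈ Finset.Icc 1 n, f k)).comp_measurable
    Nat.measurable_floor

lemma isBigO_sum_Icc_one_of_summable_norm (hf : Summable (‖f ·‖)) :
    (fun n ↦ ∑ k ∈ Finset.Icc 1 n, f k) =O[atTop] fun n ↦ (n : ℝ) ^ (0 : ℝ) := by
  refine isBigO_of_le' (c := ∑' k, ‖f k‖) _ fun n ↦ ?_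
  rw [Real.rpow_zero, norm_one, mul_one]
  exact (norm_sum_le _ _).trans (hf.sum_le_tsum _ fun k _ ↦ norm_nonneg _)

lemma exists_norm_summatory_le_rpow (hr : 0 ≤ r)
    (hO : (fun n ↦ ∑ k ∈ Finset.Icc 1 n, f k) =O[atTop] fun n ↦ (n : ℝ) ^ r) :
    ∃ C, ∀ z, 1 ≤ z → ‖summatory f z‖ ≤ C * z ^ r := by
  obtain ⟨C, hC, hbound⟩ := bound_of_isBigO_nat_atTop hO
  refine ⟨C, fun z hz ↦ ?_⟩
  have hfloor : (0 : ℝ) < ⌊z⌋₊ := by exact_mod_cast Nat.floor_pos.2 hz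
  calc ‖summatory f z‖ ≤ C * ‖(⌊z⌋₊ : ℝ) ^ r‖ := hbound (by positivity)
    _ ≤ C * z ^ r := by
      rw [Real.norm_of_nonneg (by positivity)]
      gcongr
      exact Nat.floor_le (by linarith)

lemma integrableOn_rpow_mul_norm_summatory_pow (hr : 0 ≤ r)
    (hO : (fun n ↦ ∑ k ∈ Finset.Icc 1 n, f k) =O[atTop] fun n ↦ (n : ℝ) ^ r) {a : ℝ} {k : ℕ}
    (hk : k ≠ 0) (ha : a + r * k < -1) :
    IntegrableOn (fun t ↦ t ^ a * ‖summatory f t‖ ^ k) (Ioi 0) := by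
  obtain ⟨C, hC⟩ := exists_norm_summatory_le_rpow hr hO
  rw [← Ioo_union_Ici_eq_Ioi zero_lt_one, integrableOn_union]
  refine ⟨integrableOn_zero.congr_fun
    (fun t ht ↦ by simp [summatory_of_lt_one f ht.2, hk]) measurableSet_Ioo, ?_⟩
  have hmajorant : IntegrableOn (fun t : ℝ ↦ C ^ k * t ^ (a + r * k)) (Ici 1) :=
    ((integrableOn_Ioi_rpow_of_lt ha one_half_pos).mono_set
      (Ici_subset_Ioi.2 one_half_lt_one)).const_mul _
  have hmeas : StronglyMeasurable fun t ↦ t ^ a * ‖summatory f t‖ ^ k :=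
    (measurable_id.pow_const a).stronglyMeasurable.mul
      ((stronglyMeasurable_summatory f).norm.pow k)
  refine hmajorant.mono' hmeas.aestronglyMeasurable <|
    ae_restrict_of_forall_mem measurableSet_Ici fun t (ht : 1 ≤ t) ↦ ?_
  have ht₀ : 0 < t := by linarith
  calc ‖t ^ a * ‖summatory f t‖ ^ k‖ = t ^ a * ‖summatory f t‖ ^ k :=
        Real.norm_of_nonneg (by positivity)
    _ ≤ t ^ a * (C * t ^ r) ^ k := by gcongr; exact hC t ht
    _ = C ^ k * t ^ (a + r * k) := by
      rw [mul_pow, ← Real.rpow_mul_natCast ht₀.le, Real.rpow_add ht₀]; ring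

lemma mellinConvergent_summatory [NormedSpace ℂ E] (hr : 0 ≤ r) {s : ℂ} (hs : r < s.re)
    (hO : (fun n ↦ ∑ k ∈ Finset.Icc 1 n, f k) =O[atTop] fun n ↦ (n : ℝ) ^ r) :
    MellinConvergent (summatory f) (-s) := by
  rw [MellinConvergent, mellin_convergent_iff_norm Subset.rfl measurableSet_Ioi
    (stronglyMeasurable_summatory f).aestronglyMeasurable]
  simpa using integrableOn_rpow_mul_norm_summatory_pow hr hO one_ne_zero
    (a := (-s).re - 1) (by simp; linarith)

end NormedAddCommGroup

variable {f : ℕ → ℂ} {r σ : ℝ} {s : ℂ}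

lemma mellin_summatory (hr : 0 ≤ r) (hs : r < s.re) (hS : LSeriesSummable f s)
    (hO : (fun n ↦ ∑ k ∈ Finset.Icc 1 n, f k) =O[atTop] fun n ↦ (n : ℝ) ^ r) :
    mellin (summatory f) (-s) = LSeries f s / s := by
  have hs₀ : s ≠ 0 := ne_zero_of_re_pos (hr.trans_lt hs)
  calc mellin (summatory f) (-s)
      = ∫ t : ℝ in Ici 1, (t : ℂ) ^ (-s - 1) • summatory f t := by
        refine setIntegral_eq_of_subset_of_forall_sdiff_eq_zero measurableSet_Ioi
          (Ici_subset_Ioi.2 one_pos) fun t ht ↦ ?_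
        rw [summatory_of_lt_one f (not_le.1 ht.2), smul_zero]
    _ = ∫ t : ℝ in Ioi 1, summatory f t * (t : ℂ) ^ (-(s + 1)) := by
        simp_rw [integral_Ici_eq_integral_Ioi, smul_eq_mul, mul_comm, neg_add']
    _ = LSeries f s / s := by
        rw [LSeries_eq_mul_integral f hr hs hS hO, mul_div_cancel_left₀ _ hs₀]
        rfl

theorem integral_norm_sq_summatory (hr : 0 ≤ r) (hσ : r < σ) (hS : LSeriesSummable f σ)
    (hO : (fun n ↦ ∑ k ∈ Finset.Icc 1 n, f k) =O[atTop] fun n ↦ (n : ℝ) ^ r) :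
    ∫ z in Ioi 0, ‖summatory f z‖ ^ 2 / z ^ (2 * σ + 1) =
      1 / (2 * Real.pi) * ∫ t : ℝ, ‖LSeries f (σ + t * I)‖ ^ 2 / ‖(σ : ℂ) + t * I‖ ^ 2 := by
  have hconv : MellinConvergent (summatory f) (-σ : ℝ) := by
    simpa using mellinConvergent_summatory (s := σ) hr (by simpa using hσ) hO
  have hsq : IntegrableOn (fun z ↦ z ^ (2 * -σ - 1) * ‖summatory f z‖ ^ 2) (Ioi 0) :=
    integrableOn_rpow_mul_norm_summatory_pow hr hO two_ne_zero (by push_cast; linarith)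
  have hmellin (t : ℝ) : mellin (summatory f) ((-σ : ℝ) + (-t : ℝ) * I) =
      LSeries f (σ + t * I) / (σ + t * I) := by
    rw [← mellin_summatory hr (by simpa using hσ) (hS.of_re_le_re (by simp)) hO]
    congr 1
    push_cast
    ring
  calc ∫ z in Ioi 0, ‖summatory f z‖ ^ 2 / z ^ (2 * σ + 1)
      = ∫ z in Ioi 0, z ^ (2 * -σ - 1) * ‖summatory f z‖ ^ 2 :=
        setIntegral_congr_fun measurableSet_Ioi fun z (hz : 0 < z) ↦ by
          rw [div_eq_inv_mul, ← Real.rpow_neg hz.le]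
          ring_nf
    _ = 1 / (2 * Real.pi) * ∫ t : ℝ, ‖mellin (summatory f) ((-σ : ℝ) + t * I)‖ ^ 2 := by
        rw [integral_norm_sq_mellin hconv hsq]
        field_simp
    _ = 1 / (2 * Real.pi) * ∫ t : ℝ, ‖LSeries f (σ + t * I)‖ ^ 2 / ‖(σ : ℂ) + t * I‖ ^ 2 := by
        rw [← integral_neg_eq_self]
        simp_rw [hmellin, norm_div, div_pow]

end Summatory

section FactoredNumbers

lemma summable_and_hasSum_factoredNumbers_prod_one_add {R : Type*} [NormedCommRing R]
    [CompleteSpace R] {f : ℕ → R} (hf_one : f 1 = 1)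
    (hf_mul : ∀ {m n : ℕ}, m.Coprime n → f (m * n) = f m * f n)
    (hf_sq : ∀ n, ¬Squarefree n → f n = 0) (S : Finset ℕ) :
    Summable (fun m : Nat.factoredNumbers S ↦ ‖f m‖) ∧
      HasSum (fun m : Nat.factoredNumbers S ↦ f m) (∏ p ∈ S with p.Prime, (1 + f p)) := by
  have hpow {p n : ℕ} (hp : p.Prime) (hn : n ∉ Finset.range 2) : f (p ^ n) = 0 :=
    hf_sq _ fun h ↦ by
      rw [Finset.mem_range, not_lt] at hn
      have hn_one : n = 1 := ((Nat.squarefree_pow_iff hp.ne_one (by lia)).1 h).2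
      lia
  have h := EulerProduct.summable_and_hasSum_factoredNumbers_prod_filter_prime_tsum hf_one hf_mul
    (fun hp ↦ summable_of_ne_finset_zero fun n hn ↦ norm_eq_zero.2 (hpow hp hn)) S
  have hlocal : ∏ p ∈ S with p.Prime, ∑' n, f (p ^ n) = ∏ p ∈ S with p.Prime, (1 + f p) :=
    Finset.prod_congr rfl fun p hp ↦ by
      rw [tsum_eq_sum fun n hn ↦ hpow (Finset.mem_filter.1 hp).2 hn]
      simp [Finset.sum_range_succ, hf_one]
  rwa [hlocal] at h

variable {f : ℕ → ℂ}

lemma LSeries_term_mul_of_coprime (hf_mul : ∀ {m n : ℕ}, m.Coprime n → f (m * n) = f m * f n)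
    (s : ℂ) {m n : ℕ} (hmn : m.Coprime n) :
    LSeries.term f s (m * n) = LSeries.term f s m * LSeries.term f s n := by
  rcases eq_or_ne m 0 with rfl | hm
  · simp
  rcases eq_or_ne n 0 with rfl | hn
  · simp
  rw [LSeries.term_of_ne_zero (mul_ne_zero hm hn), LSeries.term_of_ne_zero hm,
    LSeries.term_of_ne_zero hn, hf_mul hmn, Nat.cast_mul, natCast_mul_natCast_cpow,
    mul_div_mul_comm]

lemma LSeriesHasSum_indicator_factoredNumbers (hf_one : f 1 = 1)
    (hf_mul : ∀ {m n : ℕ}, m.Coprime n → f (m * n) = f m * f n)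
    (hf_sq : ∀ n, ¬Squarefree n → f n = 0) (S : Finset ℕ) (s : ℂ) :
    LSeriesHasSum ((Nat.factoredNumbers S).indicator f) s
      (∏ p ∈ S with p.Prime, (1 + f p * (p : ℂ) ^ (-s))) := by
  have hterm : LSeries.term ((Nat.factoredNumbers S).indicator f) s =
      (Nat.factoredNumbers S).indicator (LSeries.term f s) := by
    ext n
    by_cases hn : n ∈ Nat.factoredNumbers S <;> simp [LSeries.term_def, hn]
  have hprime : ∏ p ∈ S with p.Prime, (1 + f p * (p : ℂ) ^ (-s)) =
      ∏ p ∈ S with p.Prime, (1 + LSeries.term f s p) :=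
    Finset.prod_congr rfl fun p hp ↦ by
      rw [LSeries.term_of_ne_zero (Finset.mem_filter.1 hp).2.ne_zero, cpow_neg, div_eq_mul_inv]
  rw [LSeriesHasSum, hterm, hprime, ← hasSum_subtype_iff_indicator]
  exact (summable_and_hasSum_factoredNumbers_prod_one_add (by simp [hf_one])
    (LSeries_term_mul_of_coprime hf_mul s)
    (fun n hn ↦ by simp [LSeries.term_def, hf_sq n hn]) S).2

theorem integral_norm_sq_summatory_indicator_factoredNumbers (hf_one : f 1 = 1)
    (hf_mul : ∀ {m n : ℕ}, m.Coprime n → f (m * n) = f m * f n)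
    (hf_sq : ∀ n, ¬Squarefree n → f n = 0) (S : Finset ℕ) {σ : ℝ} (hσ : 0 < σ) :
    ∫ z in Ioi 0, ‖summatory ((Nat.factoredNumbers S).indicator f) z‖ ^ 2 / z ^ (2 * σ + 1) =
      1 / (2 * Real.pi) * ∫ t : ℝ,
        ‖∏ p ∈ S with p.Prime, (1 + f p * (p : ℂ) ^ (-(σ + t * I)))‖ ^ 2 /
          ‖(σ : ℂ) + t * I‖ ^ 2 := by
  have hsum : Summable fun m ↦ ‖(Nat.factoredNumbers S).indicator f m‖ := by
    simp_rw [norm_indicator_eq_indicator_norm]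
    exact (summable_subtype_iff_indicator (f := fun m ↦ ‖f m‖)).1
      (summable_and_hasSum_factoredNumbers_prod_one_add hf_one hf_mul hf_sq S).1
  have hL := LSeriesHasSum_indicator_factoredNumbers hf_one hf_mul hf_sq S
  rw [integral_norm_sq_summatory le_rfl hσ (hL σ).LSeriesSummable
    (isBigO_sum_Icc_one_of_summable_norm hsum)]
  simp_rw [(hL _).LSeries_eq]

end FactoredNumbers

lemma Pfac_le_iff_mem_factoredNumbers {x : ℝ} (hx : 1 ≤ x) {m : ℕ} (hm : m ≠ 0) :
    (Pfac m : ℝ) ≤ x ↔ m ∈ Nat.factoredNumbers (Finset.Icc 1 ⌊x⌋₊) := by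
  have hfloor : 1 ≤ ⌊x⌋₊ := Nat.le_floor (by simpa)
  rw [← Nat.le_floor_iff (by positivity), Nat.mem_factoredNumbers_iff_primeFactors_subset]
  unfold Pfac
  split_ifs with hm_le
  · obtain rfl : m = 1 := by lia
    simpa using hfloor
  · simp only [Finset.sup_le_iff, id, Finset.subset_iff, Finset.mem_Icc, hm, ne_eq,
      not_false_eq_true, true_and]
    exact forall₂_congr fun p hp ↦ by simp [(Nat.prime_of_mem_primeFactors hp).one_le]

theorem pathwise_parseval_rademacher_general {f : ℕ → ℂ} (hf_one : f 1 = 1)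
    (hf_mul : ∀ {m n : ℕ}, m.Coprime n → f (m * n) = f m * f n)
    (hf_sq : ∀ n, ¬Squarefree n → f n = 0) {x σ : ℝ} (hx : 1 ≤ x) (hσ : 0 < σ) :
    ∫ z in Ioi (0 : ℝ), ‖∑ m ∈ Finset.Icc 1 ⌊z⌋₊ with (Pfac m : ℝ) ≤ x, f m‖ ^ 2 /
        z ^ (2 * σ + 1) =
      1 / (2 * Real.pi) * ∫ t : ℝ,
        ‖∏ p ∈ Finset.Icc 1 ⌊x⌋₊ with p.Prime, (1 + f p * (p : ℂ) ^ (-(σ + t * I)))‖ ^ 2 /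
          ‖(σ : ℂ) + t * I‖ ^ 2 := by
  have hsmooth (z : ℝ) : ∑ m ∈ Finset.Icc 1 ⌊z⌋₊ with (Pfac m : ℝ) ≤ x, f m =
      summatory ((Nat.factoredNumbers (Finset.Icc 1 ⌊x⌋₊)).indicator f) z := by
    rw [summatory, Finset.sum_filter]
    refine Finset.sum_congr rfl fun m hm ↦ ?_
    have hm₀ : m ≠ 0 := by grind
    classical simp only [indicator_apply, Pfac_le_iff_mem_factoredNumbers hx hm₀]
  simp_rw [hsmooth]
  exact integral_norm_sq_summatory_indicator_factoredNumbers hf_one hf_mul hf_sq _ hσ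

namespace IsRademacherRMF

variable {Ω : Type*} [MeasurableSpace Ω] {μ : Measure Ω} {f : Ω → ℕ → ℝ}

lemma map_one (hf : IsRademacherRMF μ f) (ω : Ω) : f ω 1 = 1 := by
  simp [hf.eq_prod_of_squarefree ω 1 squarefree_one]

lemma map_mul_of_coprime (hf : IsRademacherRMF μ f) (ω : Ω) {m n : ℕ} (hmn : m.Coprime n) :
    f ω (m * n) = f ω m * f ω n := by
  by_cases hsq : Squarefree (m * n)
  · obtain ⟨hm, hn⟩ := (Nat.squarefree_mul hmn).1 hsq
    rw [hf.eq_prod_of_squarefree ω _ hsq, hf.eq_prod_of_squarefree ω _ hm,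
      hf.eq_prod_of_squarefree ω _ hn, hmn.primeFactors_mul,
      Finset.prod_union hmn.disjoint_primeFactors]
  · rw [hf.eq_zero_of_not_squarefree ω _ hsq]
    rw [Nat.squarefree_mul hmn, not_and_or] at hsq
    rcases hsq with hm | hn
    · simp [hf.eq_zero_of_not_squarefree ω m hm]
    · simp [hf.eq_zero_of_not_squarefree ω n hn]

end IsRademacherRMF

/-- Pathwise Parseval identity:
`x ∫_0^∞ |∑_{m ≤ z, P(m) ≤ x} f(m)|² z⁻² dz
  = (x/(2π)) ∫_ℝ |S_x(1/2+it)|²/|1/2+it|² dt`. -/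
theorem pathwise_parseval_rademacher
    {Ω : Type*} [MeasurableSpace Ω] (μ : Measure Ω) [IsProbabilityMeasure μ]
    (f : Ω → ℕ → ℝ) (hf : IsRademacherRMF μ f) (x : ℝ) (hx : 2 ≤ x) (ω : Ω) :
    x * ∫ z in Set.Ioi (0 : ℝ),
        (∑ m ∈ (Finset.Icc 1 ⌊z⌋₊).filter (fun m : ℕ => (Pfac m : ℝ) ≤ x), f ω m) ^ 2 / z ^ 2 =
      (x / (2 * Real.pi)) * ∫ t : ℝ,
        ‖eulerProd f ω x t‖ ^ 2 / ‖(1 / 2 : ℂ) + (t : ℂ) * Complex.I‖ ^ 2 := by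
  have h := pathwise_parseval_rademacher_general (f := fun n ↦ (f ω n : ℂ)) (x := x) (σ := 1 / 2)
    (by simp [hf.map_one ω]) (fun hmn ↦ by simp [hf.map_mul_of_coprime ω hmn])
    (fun n hn ↦ by simp [hf.eq_zero_of_not_squarefree ω n hn]) (by linarith) one_half_pos
  have hexp : (2 : ℝ) * (1 / 2) + 1 = (2 : ℕ) := by norm_num
  simp_rw [← ofReal_sum, norm_real, Real.norm_eq_abs, sq_abs, hexp, Real.rpow_natCast] at h
  simp_rw [h, eulerProd, neg_add', ofReal_div, ofReal_one, ofReal_ofNat]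
  ring
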